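/- Let f : ℝⁿ → ℝ be a polynomial of degree d ≥ 1, let K ⊆ ℝⁿ be compact with positive Lebesgue measure, assume f(x) ≥ 0 for all x ∈ K, and let t > 0 and r ≥ 0 be an integer. Then f̲^(rd)_K ≤ ∫_K f(x) φ_{2r,t}(x) dx ≤ E_t[f] + (∫_K (f(x) − f_min,K) · f(x)^{2r+1} dx) / (t^{2r+1} · (2r+1)! · ∫_K e^{−f(x)/t} dx). -/

import Mathlib

open MeasureTheory Real

/-- Lasserre's measure-based upper bound `f̲^(r)_K`: the infimum of `∫_K h f`
over sum-of-squares polynomial densities `h` of degree at most `2r` with `∫_K h = 1`. -/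
noncomputable def lasserreBound (n : ℕ) (f : (Fin n → ℝ) → ℝ) (K : Set (Fin n → ℝ)) (r : ℕ) : ℝ :=
  sInf { y : ℝ | ∃ (m : ℕ) (p : Fin m → MvPolynomial (Fin n) ℝ),
    (∀ i, (p i).totalDegree ≤ r) ∧
    (∫ x in K, MvPolynomial.eval x (∑ i, p i ^ 2)) = 1 ∧
    y = ∫ x in K, MvPolynomial.eval x (∑ i, p i ^ 2) * f x }

/-- The Boltzmann expectation `E_t[f] = (∫_K f e^{-f/t}) / (∫_K e^{-f/t})`. -/
noncomputable def boltzmannExp (n : ℕ) (f : (Fin n → ℝ) → ℝ) (K : Set (Fin n → ℝ)) (t : ℝ) : ℝ :=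
  (∫ x in K, f x * Real.exp (-f x / t)) / (∫ x in K, Real.exp (-f x / t))

/-- The truncation `φ_{2r}` at order `2r` of the Taylor expansion of `e^{-λ}`. -/
noncomputable def phiTrunc (r : ℕ) (l : ℝ) : ℝ :=
  ∑ k ∈ Finset.range (2 * r + 1), (-l) ^ k / (k.factorial : ℝ)

/-!
The polynomial `φ_{2r}` is a sum of squares of polynomials of degree at most `r`, so normalising
`φ_{2r}(f/t)` gives a feasible density for the Lasserre bound of order `r · deg f`; this is the
first inequality. For the second, the Taylor polynomials of `e^{-λ}` alternately over- and
underestimate it on `λ ≥ 0`, whence `e^{-λ} ≤ φ_{2r}(λ) ≤ e^{-λ} + λ^{2r+1}/(2r+1)!`. Integrating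
against `f - f_min ≥ 0`, the upper estimate bounds the numerator of the mean of `f - f_min` under
`φ_{2r}(f/t)` and the lower estimate bounds its denominator.
-/

theorem sum_range_choose_mul_choose {m N : ℕ} (hm : m ≤ N) (n : ℕ) :
    ∑ k ∈ Finset.range (N + 1), m.choose k * n.choose k = (m + n).choose m := by
  have hzero : ∀ k ∈ Finset.range (N + 1), k ∉ Finset.range (m + 1) →
      m.choose k * n.choose k = 0 := fun k _ hk ↦ by
    rw [Finset.mem_range, not_lt] at hk
    rw [Nat.choose_eq_zero_of_lt hk, zero_mul]
  rw [← Finset.sum_subset (Finset.range_subset_range.2 (by lia)) hzero, Nat.add_comm m n,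
    Nat.add_choose_eq, Finset.Nat.sum_antidiagonal_eq_sum_range_succ_mk]
  refine Finset.sum_congr rfl fun k hk ↦ ?_
  rw [Nat.choose_symm (Finset.mem_range_succ_iff.1 hk), mul_comm]

theorem sum_range_choose_mul_choose_sub {m N : ℕ} (hm : m ≤ N) (r : ℕ) :
    ∑ i ∈ Finset.range (r + 1), m.choose i * (N - m).choose (r - i) = N.choose r := by
  obtain ⟨n, rfl⟩ := Nat.exists_eq_add_of_le hm
  rw [Nat.add_sub_cancel_left, Nat.add_choose_eq, Finset.Nat.sum_antidiagonal_eq_sum_range_succ_mk]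

theorem sum_range_add_eq_sum_range {M : Type*} [AddCommMonoid M] {a b N : ℕ} {g : ℕ → M}
    (hN : a + b ≤ N) (hlt : ∀ m < a, g m = 0) (hge : ∀ m < N, a + b ≤ m → g m = 0) :
    ∑ j ∈ Finset.range b, g (a + j) = ∑ m ∈ Finset.range N, g m := by
  have hshift : ∑ m ∈ Finset.Ico a (a + b), g m = ∑ j ∈ Finset.range b, g (a + j) := by
    rw [Finset.sum_Ico_eq_sum_range, Nat.add_sub_cancel_left]
  rw [← hshift]
  refine Finset.sum_subset (fun m hm ↦ ?_) fun m hm hm' ↦ ?_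
  · rw [Finset.mem_Ico] at hm
    exact Finset.mem_range.2 (by lia)
  · rw [Finset.mem_range] at hm
    rw [Finset.mem_Ico] at hm'
    by_cases hma : m < a
    · exact hlt m hma
    · exact hge m hm (by lia)

section SumOfSquares

variable {𝕜 : Type*} [Field 𝕜] [CharZero 𝕜]

theorem pow_mul_pow_div_factorial_mul_choose {r i j : ℕ} (hi : i ≤ r) (hj : j ≤ r) (x : 𝕜) :
    x ^ i / (i.factorial : 𝕜) * (x ^ j / (j.factorial : 𝕜)) *
        (((r - i) + (r - j)).choose (r - i) : 𝕜) =
      x ^ (i + j) / ((i + j).factorial : 𝕜) *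
        (((i + j).choose i : 𝕜) * ((2 * r - (i + j)).choose (r - i) : 𝕜)) := by
  have hfac : ((i + j).factorial : 𝕜) ≠ 0 := Nat.cast_ne_zero.2 (Nat.factorial_ne_zero _)
  have hsub : 2 * r - (i + j) = (r - i) + (r - j) := by lia
  rw [hsub, Nat.cast_add_choose 𝕜 (a := i) (b := j), pow_add]
  field_simp

theorem sum_pow_mul_pow_div_factorial_mul_choose {r i : ℕ} (hi : i ≤ r) (x : 𝕜) :
    ∑ j ∈ Finset.range (r + 1), x ^ i / (i.factorial : 𝕜) * (x ^ j / (j.factorial : 𝕜)) *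
        (((r - i) + (r - j)).choose (r - i) : 𝕜) =
      ∑ m ∈ Finset.range (2 * r + 1), x ^ m / (m.factorial : 𝕜) *
        ((m.choose i : 𝕜) * ((2 * r - m).choose (r - i) : 𝕜)) := by
  refine Eq.trans ?_ (sum_range_add_eq_sum_range (a := i) (b := r + 1) (by lia) ?_ ?_)
  · exact Finset.sum_congr rfl fun j hj ↦
      pow_mul_pow_div_factorial_mul_choose hi (Finset.mem_range_succ_iff.1 hj) x
  · intro m hm
    simp only [Nat.choose_eq_zero_of_lt hm, Nat.cast_zero, zero_mul, mul_zero]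
  · intro m hm hm'
    simp only [Nat.choose_eq_zero_of_lt (show 2 * r - m < r - i by lia), Nat.cast_zero, mul_zero]

/- The Gram matrix of the right-hand side in the basis `x ^ i / i!` is the Pascal matrix
`((r - i) + (r - j)).choose (r - i)`, whose Cholesky factor has the entries `(r - i).choose k`. -/
theorem sum_sq_sum_pow_div_factorial_mul_choose (r : ℕ) (x : 𝕜) :
    ∑ k ∈ Finset.range (r + 1),
        (∑ i ∈ Finset.range (r + 1), x ^ i / (i.factorial : 𝕜) * ((r - i).choose k : 𝕜)) ^ 2 =
      ((2 * r).choose r : 𝕜) * ∑ m ∈ Finset.range (2 * r + 1), x ^ m / (m.factorial : 𝕜) := by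
  let u (i : ℕ) : 𝕜 := x ^ i / (i.factorial : 𝕜)
  have hcholesky (i j : ℕ) : ∑ k ∈ Finset.range (r + 1),
      u i * ((r - i).choose k : 𝕜) * (u j * ((r - j).choose k : 𝕜)) =
        u i * u j * (((r - i) + (r - j)).choose (r - i) : 𝕜) := by
    rw [← sum_range_choose_mul_choose (Nat.sub_le r i), Nat.cast_sum, Finset.mul_sum]
    refine Finset.sum_congr rfl fun k _ ↦ ?_
    push_cast
    ring
  calc ∑ k ∈ Finset.range (r + 1), (∑ i ∈ Finset.range (r + 1), u i * ((r - i).choose k : 𝕜)) ^ 2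
      = ∑ i ∈ Finset.range (r + 1), ∑ j ∈ Finset.range (r + 1),
          u i * u j * (((r - i) + (r - j)).choose (r - i) : 𝕜) := by
        simp_rw [sq, Finset.sum_mul_sum, ← hcholesky]
        rw [Finset.sum_comm]
        exact Finset.sum_congr rfl fun i _ ↦ Finset.sum_comm
    _ = ∑ i ∈ Finset.range (r + 1), ∑ m ∈ Finset.range (2 * r + 1),
          u m * ((m.choose i : 𝕜) * ((2 * r - m).choose (r - i) : 𝕜)) :=
        Finset.sum_congr rfl fun i hi ↦
          sum_pow_mul_pow_div_factorial_mul_choose (Finset.mem_range_succ_iff.1 hi) x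
    _ = ((2 * r).choose r : 𝕜) * ∑ m ∈ Finset.range (2 * r + 1), u m := by
        rw [Finset.sum_comm, Finset.mul_sum]
        refine Finset.sum_congr rfl fun m hm ↦ ?_
        rw [← sum_range_choose_mul_choose_sub (Finset.mem_range_succ_iff.1 hm) r, Nat.cast_sum,
          ← Finset.mul_sum, mul_comm]
        simp only [Nat.cast_mul]

end SumOfSquares

theorem exists_phiTrunc_eq_sum_sq (r : ℕ) :
    ∃ q : Fin (r + 1) → Polynomial ℝ, (∀ k, (q k).natDegree ≤ r) ∧
      ∀ l, phiTrunc r l = ∑ k, (q k).eval l ^ 2 := by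
  have hchoose : (0 : ℝ) < (2 * r).choose r := mod_cast Nat.choose_pos (by lia)
  refine ⟨fun k ↦ Polynomial.C (√((2 * r).choose r))⁻¹ * ∑ i ∈ Finset.range (r + 1),
    Polynomial.C ((-1) ^ i / (i.factorial : ℝ) * ((r - i).choose k : ℝ)) * Polynomial.X ^ i,
    fun k ↦ ?_, fun l ↦ ?_⟩
  · exact (Polynomial.natDegree_C_mul_le _ _).trans (Polynomial.natDegree_sum_le_of_forall_le _ _
      fun i hi ↦ (Polynomial.natDegree_C_mul_X_pow_le _ _).trans (Finset.mem_range_succ_iff.1 hi))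
  · have hsq := sum_sq_sum_pow_div_factorial_mul_choose r (-l)
    rw [phiTrunc, ← mul_right_inj' hchoose.ne', ← hsq, Finset.sum_range, Finset.mul_sum]
    refine Finset.sum_congr rfl fun k _ ↦ ?_
    simp only [Polynomial.eval_mul, Polynomial.eval_C, Polynomial.eval_finsetSum,
      Polynomial.eval_pow, Polynomial.eval_X]
    rw [mul_pow, inv_pow, Real.sq_sqrt hchoose.le, mul_inv_cancel_left₀ hchoose.ne']
    congr 1
    refine Finset.sum_congr rfl fun i _ ↦ ?_
    rw [neg_pow]
    ring

theorem hasDerivAt_sum_pow_div_factorial {𝕜 : Type*} [NontriviallyNormedField 𝕜] [CharZero 𝕜]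
    (N : ℕ) (x : 𝕜) :
    HasDerivAt (fun y : 𝕜 ↦ ∑ k ∈ Finset.range (N + 1), y ^ k / (k.factorial : 𝕜))
      (∑ k ∈ Finset.range N, x ^ k / (k.factorial : 𝕜)) x := by
  have hterm : ∀ k ∈ Finset.range (N + 1), HasDerivAt (fun y : 𝕜 ↦ y ^ k / (k.factorial : 𝕜))
      ((k : 𝕜) * x ^ (k - 1) / (k.factorial : 𝕜)) x := fun k _ ↦ (hasDerivAt_pow k x).div_const _
  refine (HasDerivAt.fun_sum hterm).congr_deriv ?_
  rw [Finset.sum_range_succ', Nat.cast_zero, zero_mul, zero_div, add_zero]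
  refine Finset.sum_congr rfl fun k _ ↦ ?_
  have hk : ((k + 1 : ℕ) : 𝕜) ≠ 0 := Nat.cast_ne_zero.2 k.succ_ne_zero
  rw [Nat.factorial_succ, Nat.cast_mul, mul_div_mul_left _ _ hk, Nat.add_sub_cancel]

theorem neg_one_pow_mul_exp_sub_sum_nonneg (N : ℕ) {x : ℝ} (hx : x ≤ 0) :
    0 ≤ (-1) ^ N * (exp x - ∑ k ∈ Finset.range N, x ^ k / (k.factorial : ℝ)) := by
  induction N generalizing x with
  | zero => simpa using (exp_pos x).le
  | succ N ih =>
    let R (M : ℕ) (y : ℝ) : ℝ :=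
      (-1) ^ M * (exp y - ∑ k ∈ Finset.range M, y ^ k / (k.factorial : ℝ))
    have hderiv (y : ℝ) : HasDerivAt (R (N + 1)) (-R N y) y :=
      (((hasDerivAt_exp y).sub (hasDerivAt_sum_pow_div_factorial N y)).const_mul _).congr_deriv
        (by simp only [R]; ring)
    have hanti : AntitoneOn (R (N + 1)) (Set.Iic 0) :=
      antitoneOn_of_hasDerivWithinAt_nonpos (convex_Iic 0)
        (fun y _ ↦ (hderiv y).continuousAt.continuousWithinAt)
        (fun y _ ↦ (hderiv y).hasDerivWithinAt)
        fun y hy ↦ neg_nonpos.2 (ih (interior_subset (s := Set.Iic 0) hy))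
    have hzero : R (N + 1) 0 = 0 := by simp [R, Finset.sum_range_succ']
    exact hzero.symm.le.trans (hanti hx Set.self_mem_Iic hx)

theorem exp_neg_le_phiTrunc (r : ℕ) {l : ℝ} (hl : 0 ≤ l) : exp (-l) ≤ phiTrunc r l := by
  have h := neg_one_pow_mul_exp_sub_sum_nonneg (2 * r + 1) (neg_nonpos.2 hl)
  rw [Odd.neg_one_pow (odd_two_mul_add_one r)] at h
  rw [phiTrunc]
  linarith

theorem phiTrunc_le_exp_neg_add (r : ℕ) {l : ℝ} (hl : 0 ≤ l) :
    phiTrunc r l ≤ exp (-l) + l ^ (2 * r + 1) / ((2 * r + 1).factorial : ℝ) := by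
  have h := neg_one_pow_mul_exp_sub_sum_nonneg (2 * r + 1 + 1) (neg_nonpos.2 hl)
  rw [(odd_two_mul_add_one r).add_one.neg_one_pow, Finset.sum_range_succ,
    (odd_two_mul_add_one r).neg_pow, neg_div] at h
  rw [phiTrunc]
  linarith

section Means

variable {α : Type*} [MeasurableSpace α] {μ : Measure α} {f : α → ℝ}

theorem integrable_sub_const_mul {w : α → ℝ} (hw : Integrable w μ)
    (hfw : Integrable (fun x ↦ f x * w x) μ) (m : ℝ) :
    Integrable (fun x ↦ (f x - m) * w x) μ := by
  simp only [sub_mul]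
  exact hfw.sub (hw.const_mul m)

theorem integral_sub_const_mul_div_integral {w : α → ℝ} (hw : Integrable w μ)
    (hfw : Integrable (fun x ↦ f x * w x) μ) (hw0 : ∫ x, w x ∂μ ≠ 0) (m : ℝ) :
    (∫ x, (f x - m) * w x ∂μ) / ∫ x, w x ∂μ = (∫ x, f x * w x ∂μ) / (∫ x, w x ∂μ) - m := by
  simp only [sub_mul]
  rw [integral_sub hfw (hw.const_mul m), integral_const_mul, sub_div, mul_div_cancel_right₀ m hw0]

theorem integral_mul_div_integral_le_add {u w e : α → ℝ} {m : ℝ} (hm : ∀ᵐ x ∂μ, m ≤ f x)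
    (hu_nonneg : 0 ≤ᵐ[μ] u) (huw : u ≤ᵐ[μ] w) (hwe : w ≤ᵐ[μ] u + e)
    (hu : Integrable u μ) (hw : Integrable w μ)
    (hfu : Integrable (fun x ↦ f x * u x) μ) (hfw : Integrable (fun x ↦ f x * w x) μ)
    (hfe : Integrable (fun x ↦ (f x - m) * e x) μ) (hu_pos : 0 < ∫ x, u x ∂μ) :
    (∫ x, f x * w x ∂μ) / ∫ x, w x ∂μ ≤
      (∫ x, f x * u x ∂μ) / (∫ x, u x ∂μ) + (∫ x, (f x - m) * e x ∂μ) / ∫ x, u x ∂μ := by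
  have huw_int : ∫ x, u x ∂μ ≤ ∫ x, w x ∂μ := integral_mono_ae hu hw huw
  have hmu : Integrable (fun x ↦ (f x - m) * u x) μ := integrable_sub_const_mul hu hfu m
  have hmw : Integrable (fun x ↦ (f x - m) * w x) μ := integrable_sub_const_mul hw hfw m
  have hnonneg : 0 ≤ ∫ x, (f x - m) * w x ∂μ := by
    refine integral_nonneg_of_ae ?_
    filter_upwards [hm, hu_nonneg, huw] with x hmx hux huwx
    exact mul_nonneg (sub_nonneg.2 hmx) (hux.trans huwx)
  have hnum : ∫ x, (f x - m) * w x ∂μ ≤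
      ∫ x, (f x - m) * u x ∂μ + ∫ x, (f x - m) * e x ∂μ := by
    rw [← integral_add hmu hfe]
    refine integral_mono_ae hmw (hmu.add hfe) ?_
    filter_upwards [hm, hwe] with x hmx hwex
    exact (mul_le_mul_of_nonneg_left hwex (sub_nonneg.2 hmx)).trans_eq (mul_add _ _ _)
  have hmean : (∫ x, (f x - m) * w x ∂μ) / ∫ x, w x ∂μ ≤
      (∫ x, (f x - m) * u x ∂μ + ∫ x, (f x - m) * e x ∂μ) / ∫ x, u x ∂μ :=
    div_le_div₀ (hnonneg.trans hnum) hnum hu_pos huw_int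
  rw [add_div, integral_sub_const_mul_div_integral hw hfw (hu_pos.trans_le huw_int).ne' m,
    integral_sub_const_mul_div_integral hu hfu hu_pos.ne' m] at hmean
  linarith

theorem integrable_mul_phiTrunc_div {g : α → ℝ} {r : ℕ}
    (hgf : ∀ k ≤ 2 * r, Integrable (fun x ↦ g x * f x ^ k) μ) (t : ℝ) :
    Integrable (fun x ↦ g x * phiTrunc r (f x / t)) μ := by
  have hterm (k : ℕ) (x : α) : g x * ((-(f x / t)) ^ k / (k.factorial : ℝ)) =
      g x * f x ^ k * ((-t⁻¹) ^ k / (k.factorial : ℝ)) := by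
    rw [div_eq_mul_inv (f x), ← mul_neg, mul_pow, mul_div_assoc, mul_assoc]
  simp only [phiTrunc, Finset.mul_sum, hterm]
  exact integrable_finsetSum _ fun k hk ↦ (hgf k (Finset.mem_range_succ_iff.1 hk)).mul_const _

theorem integrable_phiTrunc_div {r : ℕ} (hf : ∀ k ≤ 2 * r, Integrable (fun x ↦ f x ^ k) μ)
    (t : ℝ) : Integrable (fun x ↦ phiTrunc r (f x / t)) μ := by
  simpa using integrable_mul_phiTrunc_div (g := 1) (by simpa using hf) t

theorem integrable_mul_exp_neg_div {g : α → ℝ} (hg : Integrable g μ)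
    (hf : AEStronglyMeasurable f μ) (hf_nonneg : 0 ≤ᵐ[μ] f) {t : ℝ} (ht : 0 ≤ t) :
    Integrable (fun x ↦ g x * exp (-f x / t)) μ := by
  refine hg.mul_bdd (c := 1) ?_ ?_
  · exact (by fun_prop : Continuous fun y ↦ exp (-y / t)).comp_aestronglyMeasurable hf
  · filter_upwards [hf_nonneg] with x hx
    rw [norm_of_nonneg (exp_pos _).le, exp_le_one_iff]
    exact div_nonpos_of_nonpos_of_nonneg (neg_nonpos.2 hx) ht

theorem integrable_exp_neg_div [IsFiniteMeasure μ] (hf : AEStronglyMeasurable f μ)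
    (hf_nonneg : 0 ≤ᵐ[μ] f) {t : ℝ} (ht : 0 ≤ t) : Integrable (fun x ↦ exp (-f x / t)) μ := by
  simpa using integrable_mul_exp_neg_div (integrable_const 1) hf hf_nonneg ht

theorem exp_neg_div_le_phiTrunc_div_ae (hf_nonneg : 0 ≤ᵐ[μ] f) {t : ℝ} (ht : 0 ≤ t) (r : ℕ) :
    (fun x ↦ exp (-f x / t)) ≤ᵐ[μ] fun x ↦ phiTrunc r (f x / t) := by
  filter_upwards [hf_nonneg] with x hx
  rw [neg_div]
  exact exp_neg_le_phiTrunc r (div_nonneg hx ht)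

theorem integral_phiTrunc_div_pos [NeZero μ] (hfm : AEStronglyMeasurable f μ)
    (hf_nonneg : 0 ≤ᵐ[μ] f) {t : ℝ} (ht : 0 ≤ t) {r : ℕ}
    (hf : ∀ k ≤ 2 * r, Integrable (fun x ↦ f x ^ k) μ) :
    0 < ∫ x, phiTrunc r (f x / t) ∂μ := by
  have : IsFiniteMeasure μ :=
    (integrable_const_iff_isFiniteMeasure (one_ne_zero (α := ℝ))).1 (by simpa using hf 0 (by lia))
  have hexp := integrable_exp_neg_div hfm hf_nonneg ht
  exact (integral_exp_pos hexp).trans_le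
    (integral_mono_ae hexp (integrable_phiTrunc_div hf t)
      (exp_neg_div_le_phiTrunc_div_ae hf_nonneg ht r))

theorem integral_mul_phiTrunc_div_integral_le [NeZero μ] {r : ℕ} {m t : ℝ}
    (hm : ∀ᵐ x ∂μ, m ≤ f x) (hf_nonneg : 0 ≤ᵐ[μ] f)
    (hf : ∀ k ≤ 2 * r + 2, Integrable (fun x ↦ f x ^ k) μ) (ht : 0 < t) :
    (∫ x, f x * phiTrunc r (f x / t) ∂μ) / ∫ x, phiTrunc r (f x / t) ∂μ ≤
      (∫ x, f x * exp (-f x / t) ∂μ) / (∫ x, exp (-f x / t) ∂μ) +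
        (∫ x, (f x - m) * f x ^ (2 * r + 1) ∂μ) /
          (t ^ (2 * r + 1) * ((2 * r + 1).factorial : ℝ) * ∫ x, exp (-f x / t) ∂μ) := by
  have : IsFiniteMeasure μ :=
    (integrable_const_iff_isFiniteMeasure (one_ne_zero (α := ℝ))).1 (by simpa using hf 0 (by lia))
  have hf_one : Integrable f μ := by simpa using hf 1 (by lia)
  have hexp : Integrable (fun x ↦ exp (-f x / t)) μ :=
    integrable_exp_neg_div hf_one.1 hf_nonneg ht.le
  have hf_exp : Integrable (fun x ↦ f x * exp (-f x / t)) μ :=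
    integrable_mul_exp_neg_div hf_one hf_one.1 hf_nonneg ht.le
  have hphi : Integrable (fun x ↦ phiTrunc r (f x / t)) μ :=
    integrable_phiTrunc_div (fun k hk ↦ hf k (by lia)) t
  have hf_phi : Integrable (fun x ↦ f x * phiTrunc r (f x / t)) μ :=
    integrable_mul_phiTrunc_div (fun k hk ↦ by simpa only [pow_succ'] using hf (k + 1) (by lia)) t
  let c : ℝ := t ^ (2 * r + 1) * ((2 * r + 1).factorial : ℝ)
  have herr : Integrable (fun x ↦ (f x - m) * (f x ^ (2 * r + 1) / c)) μ := by
    refine integrable_sub_const_mul ((hf (2 * r + 1) (by lia)).div_const c) ?_ m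
    simpa only [mul_div_assoc', ← pow_succ'] using (hf (2 * r + 2) le_rfl).div_const c
  have hupper : (fun x ↦ phiTrunc r (f x / t)) ≤ᵐ[μ]
      (fun x ↦ exp (-f x / t)) + fun x ↦ f x ^ (2 * r + 1) / c := by
    filter_upwards [hf_nonneg] with x hx
    refine (phiTrunc_le_exp_neg_add r (div_nonneg hx ht.le)).trans_eq ?_
    rw [Pi.add_apply, neg_div, div_pow, div_div]
  have hmean := integral_mul_div_integral_le_add hm (.of_forall fun x ↦ (exp_pos _).le)
    (exp_neg_div_le_phiTrunc_div_ae hf_nonneg ht.le r) hupper hexp hphi hf_exp hf_phi herr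
    (integral_exp_pos hexp)
  simpa only [mul_div_assoc', integral_div, div_div] using hmean

end Means

theorem totalDegree_aeval_le {σ R : Type*} [CommSemiring R] (g : MvPolynomial σ R)
    (q : Polynomial R) :
    (Polynomial.aeval g q).totalDegree ≤ q.natDegree * g.totalDegree := by
  rw [Polynomial.aeval_eq_sum_range]
  refine MvPolynomial.totalDegree_finsetSum_le fun i hi ↦ ?_
  calc (q.coeff i • g ^ i).totalDegree
      ≤ (g ^ i).totalDegree := MvPolynomial.totalDegree_smul_le _ _
    _ ≤ i * g.totalDegree := MvPolynomial.totalDegree_pow _ _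
    _ ≤ q.natDegree * g.totalDegree :=
        Nat.mul_le_mul_right _ (Finset.mem_range_succ_iff.1 hi)

section Lasserre

variable {n : ℕ} {K : Set (Fin n → ℝ)} {f : (Fin n → ℝ) → ℝ}

theorem lasserreBound_le_integral {s m : ℕ} (hf : ∀ᵐ x ∂volume.restrict K, 0 ≤ f x)
    {q : Fin m → MvPolynomial (Fin n) ℝ} (hq : ∀ i, (q i).totalDegree ≤ s)
    (hone : ∫ x in K, MvPolynomial.eval x (∑ i, q i ^ 2) = 1) :
    lasserreBound n f K s ≤ ∫ x in K, MvPolynomial.eval x (∑ i, q i ^ 2) * f x := by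
  refine csInf_le ⟨0, ?_⟩ ⟨m, q, hq, hone, rfl⟩
  rintro y ⟨m, p, -, -, rfl⟩
  refine integral_nonneg_of_ae ?_
  filter_upwards [hf] with x hx
  simp only [map_sum, map_pow]
  exact mul_nonneg (Finset.sum_nonneg fun i _ ↦ sq_nonneg _) hx

theorem lasserreBound_le_integral_div_integral {s m : ℕ} (hf : ∀ᵐ x ∂volume.restrict K, 0 ≤ f x)
    {q : Fin m → MvPolynomial (Fin n) ℝ} (hq : ∀ i, (q i).totalDegree ≤ s)
    (hpos : 0 < ∫ x in K, ∑ i, MvPolynomial.eval x (q i) ^ 2) :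
    lasserreBound n f K s ≤ (∫ x in K, f x * ∑ i, MvPolynomial.eval x (q i) ^ 2) /
      ∫ x in K, ∑ i, MvPolynomial.eval x (q i) ^ 2 := by
  set Z := ∫ x in K, ∑ i, MvPolynomial.eval x (q i) ^ 2
  have hscaled (x : Fin n → ℝ) :
      MvPolynomial.eval x (∑ i, ((√Z)⁻¹ • q i) ^ 2) =
        (∑ i, MvPolynomial.eval x (q i) ^ 2) / Z := by
    simp only [map_sum, map_pow, MvPolynomial.smul_eval, mul_pow, inv_pow,
      Real.sq_sqrt hpos.le, ← Finset.mul_sum]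
    rw [inv_mul_eq_div]
  refine (lasserreBound_le_integral hf
    (fun i ↦ (MvPolynomial.totalDegree_smul_le (√Z)⁻¹ (q i)).trans (hq i)) ?_).trans_eq ?_
  · simp only [hscaled, integral_div]
    exact div_self hpos.ne'
  · simp only [hscaled, div_mul_eq_mul_div, integral_div, mul_comm (f _)]

theorem lasserreBound_le_phiTrunc {r d : ℕ} (hf : ∀ᵐ x ∂volume.restrict K, 0 ≤ f x)
    {g : MvPolynomial (Fin n) ℝ} (hg : g.totalDegree ≤ d)
    (hpos : 0 < ∫ x in K, phiTrunc r (MvPolynomial.eval x g)) :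
    lasserreBound n f K (r * d) ≤ (∫ x in K, f x * phiTrunc r (MvPolynomial.eval x g)) /
      ∫ x in K, phiTrunc r (MvPolynomial.eval x g) := by
  obtain ⟨q, hq, hphi⟩ := exists_phiTrunc_eq_sum_sq r
  have hphi_eval (x : Fin n → ℝ) : phiTrunc r (MvPolynomial.eval x g) =
      ∑ k, MvPolynomial.eval x (Polynomial.aeval g (q k)) ^ 2 := by
    simp only [hphi, ← MvPolynomial.coe_aeval_eq_eval, RingHom.coe_coe,
      ← Polynomial.aeval_algHom_apply, Polynomial.coe_aeval_eq_eval]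
  simp only [hphi_eval] at hpos ⊢
  exact lasserreBound_le_integral_div_integral hf
    (fun k ↦ (totalDegree_aeval_le g (q k)).trans (Nat.mul_le_mul (hq k) hg)) hpos

end Lasserre

theorem stmt10_general (n : ℕ) (p : MvPolynomial (Fin n) ℝ) (d : ℕ) (hdeg : p.totalDegree ≤ d)
    (f : (Fin n → ℝ) → ℝ) (hf : f = fun x => MvPolynomial.eval x p)
    (K : Set (Fin n → ℝ)) (hKpos : 0 < volume K)
    (hKint : ∀ q : MvPolynomial (Fin n) ℝ, IntegrableOn (fun x => MvPolynomial.eval x q) K)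
    (hfnn : ∀ x ∈ K, 0 ≤ f x)
    (t : ℝ) (ht : 0 < t) (r : ℕ) :
    lasserreBound n f K (r * d)
        ≤ (∫ x in K, f x * (phiTrunc r (f x / t) / (∫ x' in K, phiTrunc r (f x' / t)))) ∧
      (∫ x in K, f x * (phiTrunc r (f x / t) / (∫ x' in K, phiTrunc r (f x' / t))))
        ≤ boltzmannExp n f K t
          + (∫ x in K, (f x - sInf (f '' K)) * f x ^ (2 * r + 1)) /
              (t ^ (2 * r + 1) * ((2 * r + 1).factorial : ℝ) *
                ∫ x in K, Real.exp (-f x / t)) := by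
  have : NeZero (volume.restrict K) := ⟨Measure.restrict_eq_zero.not.2 hKpos.ne'⟩
  have hf_cont : Continuous f := hf ▸ MvPolynomial.continuous_eval p
  have hf_int (k : ℕ) : IntegrableOn (fun x ↦ f x ^ k) K := by simpa [hf] using hKint (p ^ k)
  have hae {c : ℝ} (hc : ∀ x ∈ K, c ≤ f x) : ∀ᵐ x ∂volume.restrict K, c ≤ f x :=
    (ae_restrict_iff (measurableSet_le measurable_const hf_cont.measurable)).2 (.of_forall hc)
  have hf_nonneg : ∀ᵐ x ∂volume.restrict K, 0 ≤ f x := hae hfnn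
  have hf_min : ∀ᵐ x ∂volume.restrict K, sInf (f '' K) ≤ f x := hae fun x hx ↦
    csInf_le ⟨0, Set.forall_mem_image.2 hfnn⟩ (Set.mem_image_of_mem f hx)
  simp only [mul_div_assoc', integral_div]
  refine ⟨?_, integral_mul_phiTrunc_div_integral_le hf_min hf_nonneg (fun k _ ↦ hf_int k) ht⟩
  have heval (x : Fin n → ℝ) : f x / t = MvPolynomial.eval x (t⁻¹ • p) := by
    rw [hf, MvPolynomial.smul_eval, inv_mul_eq_div]
  have hpos : 0 < ∫ x in K, phiTrunc r (f x / t) :=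
    integral_phiTrunc_div_pos hf_cont.aestronglyMeasurable hf_nonneg ht.le fun k _ ↦ hf_int k
  simp only [heval] at hpos ⊢
  exact lasserreBound_le_phiTrunc hf_nonneg
    ((MvPolynomial.totalDegree_smul_le _ _).trans hdeg) hpos

theorem stmt10 (n : ℕ) (p : MvPolynomial (Fin n) ℝ) (d : ℕ) (hd : 1 ≤ d)
    (hdeg : p.totalDegree = d)
    (f : (Fin n → ℝ) → ℝ) (hf : f = fun x => MvPolynomial.eval x p)
    (K : Set (Fin n → ℝ)) (hKcomp : IsCompact K) (hKpos : 0 < volume K)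
    (hfnn : ∀ x ∈ K, 0 ≤ f x)
    (t : ℝ) (ht : 0 < t) (r : ℕ) :
    lasserreBound n f K (r * d)
        ≤ (∫ x in K, f x * (phiTrunc r (f x / t) / (∫ x' in K, phiTrunc r (f x' / t)))) ∧
      (∫ x in K, f x * (phiTrunc r (f x / t) / (∫ x' in K, phiTrunc r (f x' / t))))
        ≤ boltzmannExp n f K t
          + (∫ x in K, (f x - sInf (f '' K)) * f x ^ (2 * r + 1)) /
              (t ^ (2 * r + 1) * ((2 * r + 1).factorial : ℝ) *
                ∫ x in K, Real.exp (-f x / t)) :=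
  stmt10_general n p d hdeg.le f hf K hKpos
    (fun q ↦ (MvPolynomial.continuous_eval q).continuousOn.integrableOn_compact hKcomp) hfnn t ht r
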